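/- arXiv:1703.09808 — 2 statements merged into one kernel-verified Lean document; each statement's English description precedes it below -/
import Mathlib

section
/- For every d ≥ 2 there exists a universal decoupling sequence: a finite family of unitary d×d matrices u_1,…,u_k and reals α_1,…,α_k ≥ 0 with Σ_i α_i = 1 such that for EVERY Hermitian d²×d² matrix h with tr(h) = 0 and tr(h Π_d) = 0 one has Σ_i α_i (u_i ⊗ u_i)† h (u_i ⊗ u_i) = 0. -/
open Matrix Kronecker
open scoped BigOperators

/-- The swap operator `Π_d` on `ℂ^d ⊗ ℂ^d`. -/
def swapOp (d : ℕ) : Matrix (Fin d × Fin d) (Fin d × Fin d) ℂ :=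
  fun p q => if p.1 = q.2 ∧ p.2 = q.1 then 1 else 0

/-!
Averaging `(u ⊗ u) X (u ⊗ u)†` over the monomial unitaries whose entries are cube roots of unity
sends every `X` into the span of `1`, the swap `Π` and the projection `D` onto the vectors
`e i ⊗ e i`, without changing `tr X`, `tr (X Π)` and `tr (X D)`. For `h` with
`tr h = tr (h Π) = 0`, only the last trace can survive. A unitary `F` all of whose entries satisfy
`|F i j|² = 1/d`, such as the discrete Fourier matrix, multiplies it by `-1/d`, since
`tr (X D) + d tr ((F ⊗ F) X (F ⊗ F)† D) = tr X + tr (X Π)` on that span. Hence averaging, mixing the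
identity and conjugation by `F ⊗ F` with weights `1/(1+d)` and `d/(1+d)`, and averaging once more
annihilates `h`. Convex combinations of conjugations by some `u ⊗ u` are closed under composition,
so the composite is again given by a pulse sequence.
-/

theorem mul_mem_convexHull_range {R M A : Type*} [Field R] [LinearOrder R] [IsStrictOrderedRing R]
    [Monoid M] [Ring A] [Algebra R A] (f : M →* A) {x y : A}
    (hx : x ∈ convexHull R (Set.range f)) (hy : y ∈ convexHull R (Set.range f)) :
    x * y ∈ convexHull R (Set.range f) := by
  have map_mul_mem (m : M) : f m * y ∈ convexHull R (Set.range f) := by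
    refine convexHull_min ?_
      ((convex_convexHull R _).linear_preimage (LinearMap.mulLeft R (f m))) hy
    rintro _ ⟨m', rfl⟩
    exact subset_convexHull R _ ⟨m * m', map_mul f m m'⟩
  refine convexHull_min ?_ ((convex_convexHull R _).linear_preimage (LinearMap.mulRight R y)) hx
  rintro _ ⟨m, rfl⟩
  exact map_mul_mem m

section GroupAverage

variable {k G V W : Type*} [Group G] [Fintype G] [CommRing k] [Invertible (Fintype.card G : k)]
  [AddCommGroup V] [Module k V] [AddCommGroup W] [Module k W] {ρ : Representation k G V} {v : V}

theorem averageMap_eq_smul_sum (ρ : Representation k G V) :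
    ρ.averageMap = ⅟(Fintype.card G : k) • ∑ g, ρ g := by
  simp [GroupAlgebra.average, Representation.asAlgebraHom_single]

theorem averageMap_mem_of_forall_mem {S : Submodule k V} (h : ∀ g, ρ g v ∈ S) :
    ρ.averageMap v ∈ S := by
  rw [averageMap_eq_smul_sum, LinearMap.smul_apply, LinearMap.sum_apply]
  exact S.smul_mem _ (S.sum_mem fun g _ ↦ h g)

theorem map_averageMap_of_forall_map_eq {f : V →ₗ[k] W} (h : ∀ g, f (ρ g v) = f v) :
    f (ρ.averageMap v) = f v := by
  rw [averageMap_eq_smul_sum, LinearMap.smul_apply, LinearMap.sum_apply, map_smul, map_sum,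
    Finset.sum_congr rfl fun g _ ↦ h g, Finset.sum_const, Finset.card_univ,
    ← Nat.cast_smul_eq_nsmul k, invOf_smul_smul]

theorem averageMap_comp_mem_convexHull_range {G H V : Type*} [Group G] [Fintype G] [Monoid H]
    [AddCommGroup V] [Module ℂ V] (ρ : Representation ℂ H V) (φ : G →* H) :
    Representation.averageMap (ρ.comp φ) ∈ convexHull ℝ (Set.range ρ) := by
  refine mem_convexHull_of_exists_fintype (fun _ : G ↦ (Fintype.card G : ℝ)⁻¹) (ρ ∘ φ)
    (fun _ ↦ by positivity) (by simp) (fun g ↦ ⟨φ g, rfl⟩) ?_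
  rw [averageMap_eq_smul_sum, Finset.smul_sum]
  refine Finset.sum_congr rfl fun g _ ↦ ?_
  ext v
  simp [← Complex.coe_smul]

end GroupAverage

section UnitaryConj

variable (n : Type*) [Fintype n] [DecidableEq n]

/-- The conjugation representation `X ↦ u X u†` of the unitary group on matrices. -/
def unitaryConj : Representation ℂ (unitaryGroup n ℂ) (Matrix n n ℂ) where
  toFun u := LinearMap.mulLeftRight ℂ ((u : Matrix n n ℂ), (u : Matrix n n ℂ)ᴴ)
  map_one' := by ext; simp
  map_mul' u v := by
    refine LinearMap.ext fun X ↦ ?_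
    simp [Matrix.mul_assoc]

/-- The diagonal embedding `u ↦ u ⊗ u`. -/
def tensorSquare : unitaryGroup n ℂ →* unitaryGroup (n × n) ℂ where
  toFun u := ⟨(u : Matrix n n ℂ) ⊗ₖ (u : Matrix n n ℂ), kronecker_mem_unitary u.2 u.2⟩
  map_one' := Subtype.ext one_kronecker_one
  map_mul' u v := Subtype.ext (by simp [mul_kronecker_mul])

/-- The representation `X ↦ (u ⊗ u) X (u ⊗ u)†`, i.e. the effect of the pulse `u†` on two-site
interactions. -/
def tensorSquareConj : Representation ℂ (unitaryGroup n ℂ) (Matrix (n × n) (n × n) ℂ) :=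
  (unitaryConj (n × n)).comp (tensorSquare n)

variable {n}

theorem unitaryConj_apply (u : unitaryGroup n ℂ) (X : Matrix n n ℂ) :
    unitaryConj n u X = u * X * (u : Matrix n n ℂ)ᴴ := rfl

@[simp]
theorem unitaryConj_one_right (u : unitaryGroup n ℂ) : unitaryConj n u 1 = 1 := by
  rw [unitaryConj_apply, Matrix.mul_one]
  exact Unitary.mul_star_self_of_mem u.2

theorem unitaryConj_mul_right (u : unitaryGroup n ℂ) (X Y : Matrix n n ℂ) :
    unitaryConj n u (X * Y) = unitaryConj n u X * unitaryConj n u Y := by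
  have hu : (u : Matrix n n ℂ)ᴴ * u = 1 := Unitary.star_mul_self_of_mem u.2
  simp only [unitaryConj_apply, Matrix.mul_assoc]
  rw [← Matrix.mul_assoc _ᴴ, hu, Matrix.one_mul]

@[simp]
theorem trace_unitaryConj (u : unitaryGroup n ℂ) (X : Matrix n n ℂ) :
    (unitaryConj n u X).trace = X.trace := by
  rw [unitaryConj_apply, trace_mul_comm, ← Matrix.mul_assoc]
  simp [← star_eq_conjTranspose]

theorem trace_unitaryConj_mul_of_fixed {u : unitaryGroup n ℂ} {A : Matrix n n ℂ}
    (hA : unitaryConj n u A = A) (X : Matrix n n ℂ) :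
    (unitaryConj n u X * A).trace = (X * A).trace := by
  conv_lhs => rw [← hA, ← unitaryConj_mul_right, trace_unitaryConj]

@[simp]
theorem tensorSquareConj_one_right (u : unitaryGroup n ℂ) : tensorSquareConj n u 1 = 1 :=
  unitaryConj_one_right (tensorSquare n u)

@[simp]
theorem trace_tensorSquareConj (u : unitaryGroup n ℂ) (X : Matrix (n × n) (n × n) ℂ) :
    (tensorSquareConj n u X).trace = X.trace :=
  trace_unitaryConj (tensorSquare n u) X

theorem trace_tensorSquareConj_mul_of_fixed {u : unitaryGroup n ℂ} {A : Matrix (n × n) (n × n) ℂ}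
    (hA : tensorSquareConj n u A = A) (X : Matrix (n × n) (n × n) ℂ) :
    (tensorSquareConj n u X * A).trace = (X * A).trace :=
  trace_unitaryConj_mul_of_fixed hA X

theorem tensorSquareConj_apply (u : unitaryGroup n ℂ) (X : Matrix (n × n) (n × n) ℂ) :
    tensorSquareConj n u X = (u ⊗ₖ u : Matrix (n × n) (n × n) ℂ) * X * (u ⊗ₖ u)ᴴ := rfl

theorem tensorSquareConj_star_apply (u : unitaryGroup n ℂ) (X : Matrix (n × n) (n × n) ℂ) :
    tensorSquareConj n (star u) X = (u ⊗ₖ u)ᴴ * X * (u ⊗ₖ u : Matrix (n × n) (n × n) ℂ) := by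
  simp [tensorSquareConj_apply, conjTranspose_kronecker, star_eq_conjTranspose]

theorem exists_pulse_sequence_of_mem_convexHull {Φ : Module.End ℂ (Matrix (n × n) (n × n) ℂ)}
    (hΦ : Φ ∈ convexHull ℝ (Set.range (tensorSquareConj n))) :
    ∃ (k : ℕ) (u : Fin k → Matrix n n ℂ) (α : Fin k → ℝ),
      (∀ i, u i ∈ unitaryGroup n ℂ) ∧ (∀ i, 0 ≤ α i) ∧ ∑ i, α i = 1 ∧
      ∀ h, ∑ i, (α i : ℂ) • ((u i ⊗ₖ u i)ᴴ * h * (u i ⊗ₖ u i)) = Φ h := by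
  obtain ⟨ι, _, α, Ψ, hα, hα_sum, hΨ, rfl⟩ := mem_convexHull_iff_exists_fintype.1 hΦ
  choose u hu using hΨ
  let e := (Fintype.equivFin ι).symm
  refine ⟨Fintype.card ι, fun i ↦ star (u (e i)), α ∘ e, fun i ↦ (star (u (e i))).2,
    fun i ↦ hα (e i), (e.sum_comp α).trans hα_sum, fun h ↦ ?_⟩
  calc ∑ i, (α (e i) : ℂ) • ((star (u (e i) : Matrix n n ℂ) ⊗ₖ star (u (e i) : Matrix n n ℂ))ᴴ * h *
          (star (u (e i) : Matrix n n ℂ) ⊗ₖ star (u (e i) : Matrix n n ℂ)))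
      = ∑ i, (α (e i) : ℂ) • Ψ (e i) h := by
        refine Finset.sum_congr rfl fun i _ ↦ ?_
        rw [← hu, ← star_star (u (e i)), tensorSquareConj_star_apply]
        simp
    _ = ∑ i, (α i : ℂ) • Ψ i h := e.sum_comp fun i ↦ (α i : ℂ) • Ψ i h
    _ = (∑ i, α i • Ψ i) h := by simp

end UnitaryConj

section SwapAndCoincidence

variable (n : Type*) [DecidableEq n]

/-- The swap operator `v ⊗ w ↦ w ⊗ v`, for an arbitrary index type. -/
def swapMatrix : Matrix (n × n) (n × n) ℂ :=
  (Equiv.prodComm n n).toPEquiv.toMatrix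

/-- The orthogonal projection onto the span of the vectors `e i ⊗ e i`. -/
def coincidenceMatrix : Matrix (n × n) (n × n) ℂ :=
  diagonal fun p ↦ if p.1 = p.2 then 1 else 0

variable {n}

theorem swapMatrix_apply (p q : n × n) :
    swapMatrix n p q = if p.1 = q.2 ∧ p.2 = q.1 then 1 else 0 := by
  simp [swapMatrix, PEquiv.toMatrix_apply, Prod.ext_iff, and_comm]

theorem coincidenceMatrix_apply (p q : n × n) :
    coincidenceMatrix n p q = if p = q ∧ p.1 = p.2 then 1 else 0 := by
  simp [coincidenceMatrix, diagonal_apply, ite_and]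

variable [Fintype n]

theorem mul_swapMatrix_apply (X : Matrix (n × n) (n × n) ℂ) (p q : n × n) :
    (X * swapMatrix n) p q = X p q.swap := by
  rw [swapMatrix, PEquiv.mul_toMatrix_toPEquiv]
  rfl

theorem swapMatrix_mul_apply (X : Matrix (n × n) (n × n) ℂ) (p q : n × n) :
    (swapMatrix n * X) p q = X p.swap q := by
  rw [swapMatrix, PEquiv.toMatrix_toPEquiv_mul]
  rfl

@[simp]
theorem swapMatrix_mul_self : swapMatrix n * swapMatrix n = 1 := by
  ext p q
  simp [mul_swapMatrix_apply, swapMatrix_apply, one_apply, Prod.ext_iff]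

@[simp]
theorem swapMatrix_mul_coincidenceMatrix :
    swapMatrix n * coincidenceMatrix n = coincidenceMatrix n := by
  ext p q
  simp only [swapMatrix_mul_apply, coincidenceMatrix_apply]
  grind

@[simp]
theorem coincidenceMatrix_mul_swapMatrix :
    coincidenceMatrix n * swapMatrix n = coincidenceMatrix n := by
  ext p q
  simp only [mul_swapMatrix_apply, coincidenceMatrix_apply]
  grind

@[simp]
theorem coincidenceMatrix_mul_self :
    coincidenceMatrix n * coincidenceMatrix n = coincidenceMatrix n := by
  simp [coincidenceMatrix]

theorem trace_mul_coincidenceMatrix (X : Matrix (n × n) (n × n) ℂ) :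
    (X * coincidenceMatrix n).trace = ∑ i, X (i, i) (i, i) := by
  simp [trace, coincidenceMatrix, Fintype.sum_prod_type]

@[simp]
theorem trace_coincidenceMatrix : (coincidenceMatrix n).trace = Fintype.card n := by
  rw [← coincidenceMatrix_mul_self, trace_mul_coincidenceMatrix]
  simp [coincidenceMatrix_apply]

@[simp]
theorem trace_swapMatrix : (swapMatrix n).trace = Fintype.card n := by
  rw [← trace_coincidenceMatrix]
  refine Finset.sum_congr rfl fun p _ ↦ ?_
  simp [swapMatrix_apply, coincidenceMatrix_apply, eq_comm]

theorem eq_zero_of_traces_eq_zero [Nontrivial n] {q r s : ℂ} {X : Matrix (n × n) (n × n) ℂ}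
    (hX : X = q • 1 + r • swapMatrix n + s • coincidenceMatrix n) (htr : X.trace = 0)
    (hswap : (X * swapMatrix n).trace = 0) (hcoin : (X * coincidenceMatrix n).trace = 0) :
    X = 0 := by
  have hd : (Fintype.card n : ℂ) ≠ 0 := by simp
  have hd' : (Fintype.card n : ℂ) - 1 ≠ 0 :=
    sub_ne_zero.2 (mod_cast Fintype.one_lt_card.ne')
  simp only [hX, Matrix.add_mul, Matrix.smul_mul, Matrix.one_mul, swapMatrix_mul_self,
    swapMatrix_mul_coincidenceMatrix, coincidenceMatrix_mul_swapMatrix, coincidenceMatrix_mul_self,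
    trace_add, trace_smul, trace_one, trace_swapMatrix, trace_coincidenceMatrix, smul_eq_mul,
    Fintype.card_prod, Nat.cast_mul] at htr hswap hcoin
  obtain rfl : q = 0 := by
    apply mul_right_cancel₀ (mul_ne_zero hd hd')
    linear_combination htr - hcoin
  obtain rfl : r = 0 := by
    apply mul_right_cancel₀ (mul_ne_zero hd hd')
    linear_combination hswap - hcoin
  obtain rfl : s = 0 := by simpa [hd] using hcoin
  simp [hX]

@[simp]
theorem tensorSquareConj_swapMatrix (u : unitaryGroup n ℂ) :
    tensorSquareConj n u (swapMatrix n) = swapMatrix n := by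
  have hcomm : (u ⊗ₖ u : Matrix (n × n) (n × n) ℂ) * swapMatrix n = swapMatrix n * (u ⊗ₖ u) := by
    ext p q
    simp [mul_swapMatrix_apply, swapMatrix_mul_apply, mul_comm]
  have huu : (u ⊗ₖ u : Matrix (n × n) (n × n) ℂ) * (u ⊗ₖ u)ᴴ = 1 := by
    simpa only [tensorSquareConj_apply, Matrix.mul_one] using tensorSquareConj_one_right u
  rw [tensorSquareConj_apply, hcomm, Matrix.mul_assoc, huu, Matrix.mul_one]

@[simp]
theorem trace_tensorSquareConj_mul_swapMatrix (u : unitaryGroup n ℂ)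
    (X : Matrix (n × n) (n × n) ℂ) :
    (tensorSquareConj n u X * swapMatrix n).trace = (X * swapMatrix n).trace :=
  trace_tensorSquareConj_mul_of_fixed (tensorSquareConj_swapMatrix u) X

theorem trace_tensorSquareConj_coincidenceMatrix_mul (u : unitaryGroup n ℂ) :
    (tensorSquareConj n u (coincidenceMatrix n) * coincidenceMatrix n).trace =
      ∑ i, ∑ j, (‖u i j‖ : ℂ) ^ 4 := by
  rw [trace_mul_coincidenceMatrix]
  refine Finset.sum_congr rfl fun i _ ↦ ?_
  have hentry : tensorSquareConj n u (coincidenceMatrix n) (i, i) (i, i) =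
      ∑ j, (u i j * starRingEnd ℂ (u i j)) ^ 2 := by
    simp [tensorSquareConj_apply, coincidenceMatrix, mul_apply (N := _ᴴ), mul_diagonal,
      Fintype.sum_prod_type, pow_two, mul_mul_mul_comm]
  simp_rw [hentry, Complex.mul_conj', ← pow_mul]

end SwapAndCoincidence

section MonomialTwirl

variable (n : Type*) [Fintype n] [DecidableEq n]

/-- The diagonal unitaries whose entries are cube roots of unity, parametrized by their exponents.
Three is the least order for which `2 e i - 2 e j` and `2 e i - e j - e k` are nonzero exponent
vectors. -/
noncomputable def phaseUnitary : Multiplicative (n → ZMod 3) →* unitaryGroup n ℂ where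
  toFun z := ⟨diagonal fun i ↦ ZMod.stdAddChar (z.toAdd i), by
    simp [mem_unitaryGroup_iff, star_eq_conjTranspose, diagonal_conjTranspose, Pi.star_def,
      ← AddChar.map_neg_eq_conj, ← AddChar.map_add_eq_mul]⟩
  map_one' := by ext : 1; simp
  map_mul' z w := by ext : 1; simp [AddChar.map_add_eq_mul]

/-- The permutation unitary `e i ↦ e (σ i)`. -/
def permUnitary : Equiv.Perm n →* unitaryGroup n ℂ :=
  (permMatrixHom (n := n) (R := ℂ)).codRestrict _ fun σ ↦ by
    simp [mem_unitaryGroup_iff, star_eq_conjTranspose, ← permMatrix_mul]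

variable {n}

theorem coe_phaseUnitary (z : Multiplicative (n → ZMod 3)) :
    (phaseUnitary n z : Matrix n n ℂ) = diagonal fun i ↦ ZMod.stdAddChar (z.toAdd i) := rfl

theorem coe_permUnitary (σ : Equiv.Perm n) :
    (permUnitary n σ : Matrix n n ℂ) = σ⁻¹.permMatrix ℂ := rfl

theorem phaseUnitary_mul_permUnitary (z : Multiplicative (n → ZMod 3)) (σ : Equiv.Perm n) :
    phaseUnitary n z * permUnitary n σ =
      permUnitary n σ * phaseUnitary n (.ofAdd (z.toAdd ∘ σ)) := by
  ext i j
  simp only [UnitaryGroup.mul_apply, coe_phaseUnitary, coe_permUnitary, diagonal_mul, mul_diagonal,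
    PEquiv.toMatrix_apply, Equiv.toPEquiv_apply, toAdd_ofAdd, Function.comp_apply]
  obtain rfl | h := eq_or_ne (σ⁻¹ i) j
  · simp
  · simp_all

theorem tensorSquareConj_phaseUnitary_apply (z : Multiplicative (n → ZMod 3))
    (X : Matrix (n × n) (n × n) ℂ) (p q : n × n) :
    tensorSquareConj n (phaseUnitary n z) X p q =
      ZMod.stdAddChar (z.toAdd p.1 + z.toAdd p.2 - (z.toAdd q.1 + z.toAdd q.2)) * X p q := by
  rw [tensorSquareConj_apply, coe_phaseUnitary, diagonal_kronecker_diagonal,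
    diagonal_conjTranspose, mul_diagonal, diagonal_mul, sub_eq_add_neg, AddChar.map_add_eq_mul,
    AddChar.map_neg_eq_conj, AddChar.map_add_eq_mul, AddChar.map_add_eq_mul]
  simp [mul_right_comm]

theorem permMatrix_kronecker_permMatrix {R l m : Type*} [DecidableEq l] [DecidableEq m]
    [MulZeroOneClass R] (σ : Equiv.Perm l) (τ : Equiv.Perm m) :
    σ.permMatrix R ⊗ₖ τ.permMatrix R = (Equiv.prodCongr σ τ).toPEquiv.toMatrix := by
  ext p q
  simp [PEquiv.toMatrix_apply, Prod.ext_iff, ← ite_and, and_comm]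

theorem tensorSquareConj_permUnitary (σ : Equiv.Perm n) (X : Matrix (n × n) (n × n) ℂ) :
    tensorSquareConj n (permUnitary n σ) X =
      X.submatrix (Prod.map σ.symm σ.symm) (Prod.map σ.symm σ.symm) := by
  rw [tensorSquareConj_apply, coe_permUnitary, conjTranspose_kronecker, conjTranspose_permMatrix,
    permMatrix_kronecker_permMatrix, permMatrix_kronecker_permMatrix,
    PEquiv.toMatrix_toPEquiv_mul, PEquiv.mul_toMatrix_toPEquiv]
  rfl

theorem tensorSquareConj_phaseUnitary_coincidenceMatrix (z : Multiplicative (n → ZMod 3)) :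
    tensorSquareConj n (phaseUnitary n z) (coincidenceMatrix n) = coincidenceMatrix n := by
  ext p q
  rw [tensorSquareConj_phaseUnitary_apply, coincidenceMatrix_apply]
  split_ifs with h
  · simp [h.1]
  · simp

theorem tensorSquareConj_permUnitary_coincidenceMatrix (σ : Equiv.Perm n) :
    tensorSquareConj n (permUnitary n σ) (coincidenceMatrix n) = coincidenceMatrix n := by
  ext p q
  simp [tensorSquareConj_permUnitary, coincidenceMatrix_apply, Prod.ext_iff]

theorem eq_and_eq_or_eq_and_eq_of_forall_add_eq_add {α : Type*} {i j k l : α}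
    (h : ∀ z : α → ZMod 3, z i + z j = z k + z l) : i = k ∧ j = l ∨ i = l ∧ j = k := by
  classical
  have hi := h (Pi.single i 1)
  have hj := h (Pi.single j 1)
  simp only [Pi.single_apply] at hi hj
  have : (1 : ZMod 3) ≠ 0 ∧ (1 + 1 : ZMod 3) ≠ 0 ∧ (1 + 1 : ZMod 3) ≠ 1 := by decide
  grind

theorem apply_eq_zero_of_phaseUnitary_fixed {X : Matrix (n × n) (n × n) ℂ}
    (hX : ∀ z, tensorSquareConj n (phaseUnitary n z) X = X) {i j k l : n}
    (h : ¬(i = k ∧ j = l ∨ i = l ∧ j = k)) : X (i, j) (k, l) = 0 := by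
  contrapose! h with hne
  refine eq_and_eq_or_eq_and_eq_of_forall_add_eq_add fun z ↦ sub_eq_zero.1 ?_
  have hz := congr_fun₂ (hX (.ofAdd z)) (i, j) (k, l)
  rw [tensorSquareConj_phaseUnitary_apply, mul_eq_right₀ hne,
    ← AddChar.map_zero_eq_one (ZMod.stdAddChar (N := 3))] at hz
  exact ZMod.injective_stdAddChar hz

theorem apply_map_of_permUnitary_fixed {X : Matrix (n × n) (n × n) ℂ}
    (hX : ∀ σ, tensorSquareConj n (permUnitary n σ) X = X) (σ : Equiv.Perm n) (p q : n × n) :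
    X (p.map σ σ) (q.map σ σ) = X p q := by
  conv_lhs => rw [← hX σ, tensorSquareConj_permUnitary]
  simp [Prod.map]

theorem exists_eq_of_monomial_fixed [Nontrivial n] {X : Matrix (n × n) (n × n) ℂ}
    (hphase : ∀ z, tensorSquareConj n (phaseUnitary n z) X = X)
    (hperm : ∀ σ, tensorSquareConj n (permUnitary n σ) X = X) :
    ∃ q r s : ℂ, X = q • 1 + r • swapMatrix n + s • coincidenceMatrix n := by
  obtain ⟨a, b, hab⟩ := exists_pair_ne n
  have two_transitive {i j : n} (hij : i ≠ j) : ∃ σ : Equiv.Perm n, σ a = i ∧ σ b = j :=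
    MulAction.is_two_pretransitive_iff.1 (Equiv.Perm.isMultiplyPretransitive n 2) hab hij
  have hid {i j : n} (hij : i ≠ j) : X (i, j) (i, j) = X (a, b) (a, b) := by
    obtain ⟨σ, rfl, rfl⟩ := two_transitive hij
    exact apply_map_of_permUnitary_fixed hperm σ (a, b) (a, b)
  have hswap {i j : n} (hij : i ≠ j) : X (i, j) (j, i) = X (a, b) (b, a) := by
    obtain ⟨σ, rfl, rfl⟩ := two_transitive hij
    exact apply_map_of_permUnitary_fixed hperm σ (a, b) (b, a)
  have hcoin (i : n) : X (i, i) (i, i) = X (a, a) (a, a) := by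
    simpa using apply_map_of_permUnitary_fixed hperm (Equiv.swap a i) (a, a) (a, a)
  have hzero {i j k l : n} := apply_eq_zero_of_phaseUnitary_fixed hphase (i := i) (j := j) (k := k)
    (l := l)
  refine ⟨X (a, b) (a, b), X (a, b) (b, a),
    X (a, a) (a, a) - X (a, b) (a, b) - X (a, b) (b, a), ?_⟩
  ext ⟨i, j⟩ ⟨k, l⟩
  simp only [Matrix.add_apply, Matrix.smul_apply, one_apply, swapMatrix_apply,
    coincidenceMatrix_apply, smul_eq_mul, Prod.mk.injEq]
  grind

variable (n) in
/-- The average of `X ↦ (u ⊗ u) X (u ⊗ u)†` over all products `u` of a permutation matrix and a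
diagonal matrix of cube roots of unity. -/
noncomputable def monomialTwirl : Module.End ℂ (Matrix (n × n) (n × n) ℂ) :=
  Representation.averageMap ((tensorSquareConj n).comp (permUnitary n)) *
    Representation.averageMap ((tensorSquareConj n).comp (phaseUnitary n))

theorem monomialTwirl_mem_convexHull :
    monomialTwirl n ∈ convexHull ℝ (Set.range (tensorSquareConj n)) :=
  mul_mem_convexHull_range _
    (averageMap_comp_mem_convexHull_range (tensorSquareConj n) (permUnitary n))
    (averageMap_comp_mem_convexHull_range (tensorSquareConj n) (phaseUnitary n))

theorem tensorSquareConj_permUnitary_monomialTwirl (σ : Equiv.Perm n)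
    (X : Matrix (n × n) (n × n) ℂ) :
    tensorSquareConj n (permUnitary n σ) (monomialTwirl n X) = monomialTwirl n X :=
  Representation.averageMap_invariant (MonoidHom.comp (tensorSquareConj n) (permUnitary n)) _ σ

theorem tensorSquareConj_phaseUnitary_monomialTwirl (z : Multiplicative (n → ZMod 3))
    (X : Matrix (n × n) (n × n) ℂ) :
    tensorSquareConj n (phaseUnitary n z) (monomialTwirl n X) = monomialTwirl n X := by
  let ρ : Representation ℂ (Multiplicative (n → ZMod 3)) (Matrix (n × n) (n × n) ℂ) :=
    (tensorSquareConj n).comp (phaseUnitary n)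
  -- Permutations normalize the phases, so they preserve the phase-invariant matrices.
  refine averageMap_mem_of_forall_mem (S := ρ.invariants) (fun σ w ↦ ?_) z
  have hw := Representation.averageMap_invariant ρ X (.ofAdd (w.toAdd ∘ σ))
  simp only [ρ, MonoidHom.comp_apply] at hw ⊢
  rw [← Module.End.mul_apply, ← map_mul, phaseUnitary_mul_permUnitary, map_mul,
    Module.End.mul_apply, hw]

theorem exists_monomialTwirl_eq [Nontrivial n] (X : Matrix (n × n) (n × n) ℂ) :
    ∃ q r s : ℂ, monomialTwirl n X = q • 1 + r • swapMatrix n + s • coincidenceMatrix n :=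
  exists_eq_of_monomial_fixed (tensorSquareConj_phaseUnitary_monomialTwirl · X)
    (tensorSquareConj_permUnitary_monomialTwirl · X)

theorem trace_monomialTwirl_mul_of_fixed {A : Matrix (n × n) (n × n) ℂ}
    (hphase : ∀ z, tensorSquareConj n (phaseUnitary n z) A = A)
    (hperm : ∀ σ, tensorSquareConj n (permUnitary n σ) A = A)
    (X : Matrix (n × n) (n × n) ℂ) : (monomialTwirl n X * A).trace = (X * A).trace := by
  let f : Matrix (n × n) (n × n) ℂ →ₗ[ℂ] ℂ := traceLinearMap (n × n) ℂ ℂ ∘ₗ LinearMap.mulRight ℂ A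
  change f (monomialTwirl n X) = f X
  rw [monomialTwirl, Module.End.mul_apply, map_averageMap_of_forall_map_eq,
    map_averageMap_of_forall_map_eq]
  · exact fun z ↦ trace_tensorSquareConj_mul_of_fixed (hphase z) X
  · exact fun σ ↦ trace_tensorSquareConj_mul_of_fixed (hperm σ) _

@[simp]
theorem trace_monomialTwirl (X : Matrix (n × n) (n × n) ℂ) :
    (monomialTwirl n X).trace = X.trace := by
  simpa using trace_monomialTwirl_mul_of_fixed (A := 1) (by simp) (by simp) X

@[simp]
theorem trace_monomialTwirl_mul_swapMatrix (X : Matrix (n × n) (n × n) ℂ) :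
    (monomialTwirl n X * swapMatrix n).trace = (X * swapMatrix n).trace :=
  trace_monomialTwirl_mul_of_fixed (by simp) (by simp) X

@[simp]
theorem trace_monomialTwirl_mul_coincidenceMatrix (X : Matrix (n × n) (n × n) ℂ) :
    (monomialTwirl n X * coincidenceMatrix n).trace = (X * coincidenceMatrix n).trace :=
  trace_monomialTwirl_mul_of_fixed tensorSquareConj_phaseUnitary_coincidenceMatrix
    tensorSquareConj_permUnitary_coincidenceMatrix X

theorem monomialTwirl_eq_zero [Nontrivial n] {X : Matrix (n × n) (n × n) ℂ} (htr : X.trace = 0)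
    (hswap : (X * swapMatrix n).trace = 0) (hcoin : (X * coincidenceMatrix n).trace = 0) :
    monomialTwirl n X = 0 := by
  obtain ⟨q, r, s, hX⟩ := exists_monomialTwirl_eq X
  exact eq_zero_of_traces_eq_zero hX (by simpa) (by simpa) (by simpa)

end MonomialTwirl

section FlatUnitary

variable (n : Type*) [Fintype n] [DecidableEq n]

theorem exists_flat_unitary [Nonempty n] :
    ∃ F : unitaryGroup n ℂ, ∀ i j, ‖F i j‖ ^ 2 = (Fintype.card n : ℝ)⁻¹ := by
  let d := Fintype.card n
  let e : n ≃ ZMod d := Fintype.equivOfCardEq (by simp [d])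
  let F : Matrix n n ℂ := of fun i j ↦ ((√d)⁻¹ : ℝ) * ZMod.stdAddChar (e j * e i)
  have hsqrt : (((√d)⁻¹ : ℝ) : ℂ) ^ 2 = (d : ℂ)⁻¹ := by
    rw [← Complex.ofReal_pow, inv_pow, Real.sq_sqrt d.cast_nonneg]
    simp
  have hF : F * Fᴴ = 1 := by
    ext i k
    calc (F * Fᴴ) i k = (d : ℂ)⁻¹ * ∑ j, ZMod.stdAddChar (e j * (e i - e k)) := by
          rw [Matrix.mul_apply, Finset.mul_sum]
          refine Finset.sum_congr rfl fun j _ ↦ ?_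
          rw [mul_sub, sub_eq_add_neg, AddChar.map_add_eq_mul, AddChar.map_neg_eq_conj, ← hsqrt]
          simp only [F, of_apply, conjTranspose_apply, star_mul', RCLike.star_def,
            Complex.conj_ofReal]
          ring
      _ = (1 : Matrix n n ℂ) i k := by
          rw [e.sum_comp fun x ↦ ZMod.stdAddChar (x * (e i - e k)),
            AddChar.sum_mulShift _ (ZMod.isPrimitive_stdAddChar d)]
          simp [sub_eq_zero, one_apply, d]
  refine ⟨⟨F, mem_unitaryGroup_iff.2 hF⟩, fun i j ↦ ?_⟩
  simp [F, d]

variable {n} in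
theorem trace_mul_coincidenceMatrix_add_flat [Nonempty n] {F : unitaryGroup n ℂ}
    (hF : ∀ i j, ‖F i j‖ ^ 2 = (Fintype.card n : ℝ)⁻¹) {q r s : ℂ}
    {X : Matrix (n × n) (n × n) ℂ}
    (hX : X = q • 1 + r • swapMatrix n + s • coincidenceMatrix n) :
    (X * coincidenceMatrix n).trace +
        Fintype.card n * (tensorSquareConj n F X * coincidenceMatrix n).trace =
      X.trace + (X * swapMatrix n).trace := by
  have hFF : (tensorSquareConj n F (coincidenceMatrix n) * coincidenceMatrix n).trace = 1 := by
    have (i j : n) : (‖F i j‖ : ℂ) ^ 4 = (Fintype.card n : ℂ)⁻¹ ^ 2 := by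
      rw [show 4 = 2 * 2 from rfl, pow_mul, ← Complex.ofReal_pow, hF]
      simp
    simp only [trace_tensorSquareConj_coincidenceMatrix_mul, this, Finset.sum_const,
      Finset.card_univ, nsmul_eq_mul]
    field_simp
  simp only [hX, map_add, map_smul, tensorSquareConj_one_right, tensorSquareConj_swapMatrix,
    Matrix.add_mul, Matrix.smul_mul, Matrix.one_mul, swapMatrix_mul_self,
    swapMatrix_mul_coincidenceMatrix, coincidenceMatrix_mul_swapMatrix, coincidenceMatrix_mul_self,
    trace_add, trace_smul, trace_one, trace_swapMatrix, trace_coincidenceMatrix, hFF, smul_eq_mul,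
    Fintype.card_prod, Nat.cast_mul]
  ring

theorem exists_decoupling_map [Nontrivial n] :
    ∃ Φ ∈ convexHull ℝ (Set.range (tensorSquareConj n)), ∀ h : Matrix (n × n) (n × n) ℂ,
      h.trace = 0 → (h * swapMatrix n).trace = 0 → Φ h = 0 := by
  obtain ⟨F, hF⟩ := exists_flat_unitary n
  let d : ℝ := Fintype.card n
  let mix : Module.End ℂ (Matrix (n × n) (n × n) ℂ) :=
    (1 / (1 + d)) • 1 + (d / (1 + d)) • tensorSquareConj n F
  have hmix : mix ∈ convexHull ℝ (Set.range (tensorSquareConj n)) :=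
    convex_convexHull ℝ _ (subset_convexHull ℝ _ (Set.mem_range.2 ⟨1, map_one _⟩))
      (subset_convexHull ℝ _ (Set.mem_range_self F)) (by positivity) (by positivity)
      (by rw [← add_div, div_self (by positivity)])
  refine ⟨monomialTwirl n * mix * monomialTwirl n, mul_mem_convexHull_range _
    (mul_mem_convexHull_range _ monomialTwirl_mem_convexHull hmix) monomialTwirl_mem_convexHull,
    fun h htr hswap ↦ ?_⟩
  obtain ⟨q, r, s, hX⟩ := exists_monomialTwirl_eq h
  have hcoin : (mix (monomialTwirl n h) * coincidenceMatrix n).trace = 0 :=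
    calc (mix (monomialTwirl n h) * coincidenceMatrix n).trace
        = ((monomialTwirl n h * coincidenceMatrix n).trace + Fintype.card n *
            (tensorSquareConj n F (monomialTwirl n h) * coincidenceMatrix n).trace) /
              (1 + Fintype.card n) := by
          simp [mix, d, Matrix.add_mul, -trace_monomialTwirl_mul_coincidenceMatrix,
            div_eq_inv_mul, mul_add, mul_assoc]
      _ = 0 := by
          rw [trace_mul_coincidenceMatrix_add_flat hF hX, trace_monomialTwirl,
            trace_monomialTwirl_mul_swapMatrix, htr, hswap, add_zero, zero_div]
  exact monomialTwirl_eq_zero (by simp [mix, htr]) (by simp [mix, Matrix.add_mul, hswap]) hcoin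

end FlatUnitary

theorem universal_decoupling_sequence_general (n : Type*) [Fintype n] [DecidableEq n]
    [Nontrivial n] :
    ∃ (k : ℕ) (u : Fin k → Matrix n n ℂ) (α : Fin k → ℝ),
      (∀ i, u i ∈ unitaryGroup n ℂ) ∧ (∀ i, 0 ≤ α i) ∧ ∑ i, α i = 1 ∧
      ∀ h : Matrix (n × n) (n × n) ℂ, h.trace = 0 → (h * swapMatrix n).trace = 0 →
        ∑ i, (α i : ℂ) • ((u i ⊗ₖ u i)ᴴ * h * (u i ⊗ₖ u i)) = 0 := by
  obtain ⟨Φ, hΦ, hzero⟩ := exists_decoupling_map n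
  obtain ⟨k, u, α, hu, hα, hα_sum, hsum⟩ := exists_pulse_sequence_of_mem_convexHull hΦ
  exact ⟨k, u, α, hu, hα, hα_sum, fun h htr hswap ↦ (hsum h).trans (hzero h htr hswap)⟩

/-- For every `d ≥ 2` there is a universal decoupling sequence: a single pulse sequence
that cancels every traceless Hermitian interaction `h` with `tr (h Π_d) = 0`. -/
theorem universal_decoupling_sequence (d : ℕ) (hd : 2 ≤ d) :
    ∃ (k : ℕ) (u : Fin k → Matrix (Fin d) (Fin d) ℂ) (α : Fin k → ℝ),
      (∀ i, u i ∈ Matrix.unitaryGroup (Fin d) ℂ) ∧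
      (∀ i, 0 ≤ α i) ∧ (∑ i, α i = 1) ∧
      ∀ h : Matrix (Fin d × Fin d) (Fin d × Fin d) ℂ,
        h.IsHermitian → h.trace = 0 → (h * swapOp d).trace = 0 →
        ∑ i, (α i : ℂ) • ((u i ⊗ₖ u i)ᴴ * h * (u i ⊗ₖ u i)) = 0 := by
  have : Nontrivial (Fin d) := Fin.nontrivial_iff_two_le.2 hd
  have hswapOp : swapOp d = swapMatrix (Fin d) := Matrix.ext fun p q ↦ (swapMatrix_apply p q).symm
  obtain ⟨k, u, α, hu, hα, hα_sum, hzero⟩ := universal_decoupling_sequence_general (Fin d)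
  exact ⟨k, u, α, hu, hα, hα_sum, fun h _ htr hswap ↦ hzero h htr (hswapOp ▸ hswap)⟩
end

section
/- (Depolarization by bilocal operations, Dür et al.) For every d ≥ 2 there exist finitely many unitary d×d matrices v_1,…,v_k and reals p_1,…,p_k ≥ 0 with Σ_i p_i = 1 such that for every d²×d² complex matrix ρ, Σ_i p_i (v_i ⊗ v_i)† ρ (v_i ⊗ v_i) = A_d · tr(A_d ρ)/tr(A_d) + S_d · tr(S_d ρ)/tr(S_d). -/
open Matrix Kronecker
open scoped BigOperators

/-- The projector `S_d = (I + Π_d)/2` onto the symmetric subspace. -/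
noncomputable def symProj (d : ℕ) : Matrix (Fin d × Fin d) (Fin d × Fin d) ℂ :=
  (1/2 : ℂ) • (1 + swapOp d)

/-- The projector `A_d = (I - Π_d)/2` onto the antisymmetric subspace. -/
noncomputable def antisymProj (d : ℕ) : Matrix (Fin d × Fin d) (Fin d × Fin d) ℂ :=
  (1/2 : ℂ) • (1 - swapOp d)

/-!
Average `X ↦ (v ⊗ v) X (v ⊗ v)†` over the Haar measure of the unitary group. The group is compact,
and so is the convex hull of a compact set in finite dimension; hence the average lies in the convex
hull of the conjugations, i.e. it is a finite convex combination of them. The averaged matrix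
commutes with every `v ⊗ v`; testing this on reflections and permutation matrices shows that it is
a combination of `1` and the swap, hence of the two projectors. The coefficients are determined by
its traces against the projectors, which averaging does not change.
-/

section ConvexHull

variable {E : Type*} [AddCommGroup E] [Module ℝ E]

theorem convexHull_subset_iterate_convexJoin {s : Set E} {t : Finset E} (hts : ↑t ⊆ s) {k : ℕ}
    (htk : t.card ≤ k + 1) : convexHull ℝ (t : Set E) ⊆ (convexJoin ℝ s)^[k] s := by
  classical
  induction k generalizing t with
  | zero =>
    have ht : (t : Set E).Subsingleton := Finset.card_le_one_iff_subsingleton.1 htk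
    rwa [ht.convex.convexHull_eq]
  | succ k ih =>
    rw [Function.iterate_succ_apply']
    obtain rfl | ⟨x, hx⟩ := t.eq_empty_or_nonempty
    · simp
    have hxs : x ∈ s := hts hx
    obtain htk | htk := htk.lt_or_eq
    · exact (ih hts (Nat.lt_succ_iff.1 htk)).trans (subset_convexJoin_right ⟨x, hxs⟩)
    have herase_card : (t.erase x).card = k + 1 := by rw [Finset.card_erase_of_mem hx, htk]; rfl
    have herase : (t.erase x : Set E) ⊆ s := (Finset.coe_subset.2 (t.erase_subset x)).trans hts
    rw [← Finset.insert_erase hx, Finset.coe_insert,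
      convexHull_insert (Finset.card_pos.1 (herase_card ▸ k.succ_pos))]
    exact convexJoin_mono (Set.singleton_subset_iff.2 hxs) (ih herase herase_card.le)

variable [TopologicalSpace E] [ContinuousAdd E] [ContinuousSMul ℝ E]

theorem isCompact_convexJoin {s t : Set E} (hs : IsCompact s) (ht : IsCompact t) :
    IsCompact (convexJoin ℝ s t) := by
  have image_eq : (fun x : ℝ × E × E ↦ (1 - x.1) • x.2.1 + x.1 • x.2.2) ''
      (Set.Icc 0 1 ×ˢ s ×ˢ t) = convexJoin ℝ s t := by
    ext x
    simp only [Set.mem_image, Set.mem_prod, mem_convexJoin, segment_eq_image, Prod.exists]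
    grind
  rw [← image_eq]
  exact (isCompact_Icc.prod (hs.prod ht)).image (by fun_prop)

theorem isCompact_convexHull [FiniteDimensional ℝ E] {s : Set E} (hs : IsCompact s) :
    IsCompact (convexHull ℝ s) := by
  have iterate_subset (k : ℕ) : (convexJoin ℝ s)^[k] s ⊆ convexHull ℝ s := by
    induction k with
    | zero => exact subset_convexHull ℝ s
    | succ k ih =>
      rw [Function.iterate_succ_apply']
      exact convexJoin_subset (subset_convexHull ℝ s) ih (convex_convexHull ℝ s)
  have isCompact_iterate (k : ℕ) : IsCompact ((convexJoin ℝ s)^[k] s) := by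
    induction k with
    | zero => exact hs
    | succ k ih => exact Function.iterate_succ_apply' _ k s ▸ isCompact_convexJoin hs ih
  suffices h : convexHull ℝ s ⊆ (convexJoin ℝ s)^[Module.finrank ℝ E] s by
    exact h.antisymm (iterate_subset _) ▸ isCompact_iterate _
  rw [convexHull_eq_union]
  refine Set.iUnion_subset fun t ↦ Set.iUnion₂_subset fun hts ht ↦
    convexHull_subset_iterate_convexJoin hts ?_
  simpa using ht.card_le_finrank_succ.trans (by gcongr; exact Submodule.finrank_le _)

end ConvexHull

theorem compactSpace_unitary {A : Type*} [NormedRing A] [StarRing A] [CStarRing A]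
    [ProperSpace A] : CompactSpace (unitary A) := by
  nontriviality A
  refine isCompact_iff_compactSpace.1 <| Metric.isCompact_of_isClosed_isBounded isClosed_unitary <|
    Metric.isBounded_closedBall (x := 0) (r := 1) |>.subset fun u hu ↦ ?_
  simp [CStarRing.norm_of_mem_unitary hu]

open MeasureTheory Measure in
theorem exists_mem_convexHull_range_forall_mul_eq {G A : Type*} [Group G] [TopologicalSpace G]
    [IsTopologicalGroup G] [CompactSpace G] [NormedRing A] [NormedAlgebra ℝ A]
    [FiniteDimensional ℝ A] {φ : G →* A} (hφ : Continuous φ) :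
    ∃ T ∈ convexHull ℝ (Set.range φ), ∀ g, φ g * T = T := by
  borelize G
  let μ : Measure G := haarMeasure ⊤
  have : IsProbabilityMeasure μ := ⟨haarMeasure_self⟩
  have : CompleteSpace A := FiniteDimensional.complete ℝ A
  have hint : Integrable φ μ := hφ.integrable_of_hasCompactSupport (.of_compactSpace _)
  refine ⟨∫ g, φ g ∂μ, (convex_convexHull ℝ _).integral_mem
    (isCompact_convexHull (isCompact_range hφ)).isClosed
    (.of_forall fun g ↦ subset_convexHull ℝ _ ⟨g, rfl⟩) hint, fun g ↦ ?_⟩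
  calc φ g * ∫ h, φ h ∂μ = ∫ h, φ (g * h) ∂μ := by
        simp only [map_mul, integral_const_mul_of_integrable hint]
    _ = ∫ h, φ h ∂μ := integral_mul_left_eq_self φ g

theorem exists_convexCombination_conj_commute {G A : Type*} [Group G] [TopologicalSpace G]
    [IsTopologicalGroup G] [CompactSpace G] [NormedRing A] [NormedAlgebra ℝ A]
    [FiniteDimensional ℝ A] {u : G →* A} (hu : Continuous u) :
    ∃ (ι : Type) (_ : Fintype ι) (g : ι → G) (p : ι → ℝ), (∀ i, 0 ≤ p i) ∧ ∑ i, p i = 1 ∧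
      ∀ x h, Commute (u h) (∑ i, p i • (u (g i)⁻¹ * x * u (g i))) := by
  let conj : G →* (A →L[ℝ] A) :=
    { toFun g := ContinuousLinearMap.mulLeftRight ℝ A (u g) (u g⁻¹)
      map_one' := by ext; simp
      map_mul' g h := by ext; simp [mul_assoc] }
  have hconj : Continuous conj := by
    change Continuous fun g ↦ ContinuousLinearMap.mulLeftRight ℝ A (u g) (u g⁻¹)
    fun_prop
  obtain ⟨T, hT, hT_fixed⟩ := exists_mem_convexHull_range_forall_mul_eq hconj
  obtain ⟨ι, _, p, z, hp, hp_sum, hz, rfl⟩ := mem_convexHull_iff_exists_fintype.1 hT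
  choose g hg using hz
  refine ⟨ι, inferInstance, fun i ↦ (g i)⁻¹, p, hp, hp_sum, fun x h ↦ ?_⟩
  have hx := DFunLike.congr_fun (hT_fixed h) x
  set y := ∑ i, p i • (u (g i)⁻¹⁻¹ * x * u (g i)⁻¹) with hy
  have hfix : u h * y * u h⁻¹ = y := by
    simpa [hy, ← hg, conj, Finset.mul_sum, Finset.sum_mul] using hx
  calc u h * y = u h * y * u h⁻¹ * u h := by
        rw [mul_assoc _ (u h⁻¹), ← map_mul, inv_mul_cancel, map_one, mul_one]
    _ = y * u h := by rw [hfix]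

section Commutant

variable {n : Type*} [DecidableEq n]

theorem kronecker_permMatrix {R : Type*} [NonAssocSemiring R] (σ τ : Equiv.Perm n) :
    σ.permMatrix R ⊗ₖ τ.permMatrix R = Equiv.Perm.permMatrix R (σ.prodCongr τ) := by
  ext ⟨i, j⟩ ⟨k, l⟩
  simp [PEquiv.toMatrix_apply, ← ite_and, and_comm]

variable [Fintype n]

theorem permMatrix_mem_unitaryGroup {R : Type*} [CommRing R] [StarRing R] (σ : Equiv.Perm n) :
    σ.permMatrix R ∈ unitaryGroup n R := by
  rw [mem_unitaryGroup_iff, star_eq_conjTranspose, conjTranspose_permMatrix, ← permMatrix_mul,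
    inv_mul_cancel, permMatrix_one]

/-- Invariance of `X` under all bilocal unitary conjugations `X ↦ (v ⊗ v) X (v ⊗ v)†`, phrased as
membership in the commutant of the operators `v ⊗ v`. -/
def IsBilocallyInvariant (X : Matrix (n × n) (n × n) ℂ) : Prop :=
  ∀ v ∈ unitaryGroup n ℂ, Commute (v ⊗ₖ v) X

namespace IsBilocallyInvariant

variable {X : Matrix (n × n) (n × n) ℂ}

theorem apply_perm (hX : IsBilocallyInvariant X) (σ : Equiv.Perm n) (i j k l : n) :
    X (σ i, σ j) (σ k, σ l) = X (i, j) (k, l) := by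
  have h := hX _ (permMatrix_mem_unitaryGroup σ)
  rw [kronecker_permMatrix, Commute, SemiconjBy, PEquiv.toMatrix_toPEquiv_mul,
    PEquiv.mul_toMatrix_toPEquiv] at h
  simpa using congr_fun₂ h (i, j) (σ k, σ l)

theorem commute_one_kronecker_add_kronecker_one (hX : IsBilocallyInvariant X)
    {W : Matrix n n ℂ} (hW : W.IsHermitian) (hWW : W * W = 1) : Commute (1 ⊗ₖ W + W ⊗ₖ 1) X := by
  have hI := Complex.I_mul_I
  have W_mem : W ∈ unitaryGroup n ℂ := by
    rwa [mem_unitaryGroup_iff, star_eq_conjTranspose, hW.eq]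
  -- For this square root `v` of `W`, the cross terms of `v ⊗ v` are half of `1 ⊗ W + W ⊗ 1`.
  let v : Matrix n n ℂ := ((1 + Complex.I) / 2) • 1 + ((1 - Complex.I) / 2) • W
  have v_mem : v ∈ unitaryGroup n ℂ := by
    rw [mem_unitaryGroup_iff, star_eq_conjTranspose]
    simp only [v, conjTranspose_add, conjTranspose_smul, conjTranspose_one, hW.eq, add_mul, mul_add,
      smul_mul_smul_comm, one_mul, mul_one, hWW, star_div₀, star_add, star_sub, star_one,
      Complex.star_def, Complex.conj_I, star_ofNat]
    match_scalars
    · linear_combination -hI / 2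
    · linear_combination hI / 2
  have expand : 1 ⊗ₖ W + W ⊗ₖ 1 =
      (2 : ℂ) • (v ⊗ₖ v) - Complex.I • 1 + Complex.I • (W ⊗ₖ W) := by
    simp only [v, add_kronecker, kronecker_add, smul_kronecker, kronecker_smul, one_kronecker_one]
    match_scalars
    · linear_combination hI / 2
    · linear_combination hI / 2
    · linear_combination -hI / 2
    · linear_combination -hI / 2
  rw [expand]
  exact (((hX v v_mem).smul_left 2).sub_left ((Commute.one_left X).smul_left _)).add_left
    ((hX W W_mem).smul_left _)

theorem apply_eq_zero (hX : IsBilocallyInvariant X) {i j k l : n} (h : s(i, j) ≠ s(k, l)) :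
    X (i, j) (k, l) = 0 := by
  -- `e_i ⊗ e_j` is an eigenvector of `1 ⊗ W + W ⊗ 1`, `W = diagonal (w m)`, with eigenvalue
  -- `w m i + w m j`, and over all `m` these eigenvalues determine the unordered pair `s(i, j)`.
  let w (m i : n) : ℂ := if i = m then -1 else 1
  obtain ⟨m, hm⟩ : ∃ m, w m i + w m j ≠ w m k + w m l := by
    by_contra! eigenvalues_eq
    have at_i := eigenvalues_eq i
    have at_j := eigenvalues_eq j
    grind [Sym2.eq_iff]
  let W : Matrix n n ℂ := diagonal (w m)
  have W_herm : W.IsHermitian := by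
    refine isHermitian_diagonal_iff.2 fun i ↦ ?_
    by_cases hi : i = m <;> simp [w, hi, IsSelfAdjoint]
  have W_sq : W * W = 1 := by
    rw [diagonal_mul_diagonal, ← diagonal_one]
    congr! with i
    by_cases hi : i = m <;> simp [w, hi]
  have entries :=
    congr_fun₂ (hX.commute_one_kronecker_add_kronecker_one W_herm W_sq).eq (i, j) (k, l)
  simp only [W, ← diagonal_one, diagonal_kronecker_diagonal, diagonal_add, diagonal_mul,
    mul_diagonal] at entries
  have eigenvalues : X (i, j) (k, l) * (w m i + w m j) = X (i, j) (k, l) * (w m k + w m l) := by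
    linear_combination entries
  exact (mul_eq_mul_left_iff.1 eigenvalues).resolve_left hm

theorem apply_self_self (hX : IsBilocallyInvariant X) {i j : n} (hij : i ≠ j) :
    X (i, i) (i, i) = X (i, j) (i, j) + X (i, j) (j, i) := by
  let W : Matrix n n ℂ := (Equiv.swap i j).permMatrix ℂ
  have W_herm : W.IsHermitian := by
    simp [W, IsHermitian, conjTranspose_permMatrix]
  have W_sq : W * W = 1 := by
    rw [← permMatrix_mul, Equiv.swap_mul_self, permMatrix_one]
  have entries :=
    congr_fun₂ (hX.commute_one_kronecker_add_kronecker_one W_herm W_sq).eq (i, i) (i, j)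
  have sum_eq : X (i, j) (i, j) + X (j, i) (i, j) = X (i, i) (i, i) + X (i, i) (j, j) := by
    simpa [W, ← permMatrix_one, kronecker_permMatrix, add_mul, mul_add, Matrix.add_apply,
      PEquiv.toMatrix_toPEquiv_mul, PEquiv.mul_toMatrix_toPEquiv] using! entries
  have swap_eq : X (j, i) (i, j) = X (i, j) (j, i) := by
    simpa using hX.apply_perm (Equiv.swap i j) i j j i
  have zero : X (i, i) (j, j) = 0 := hX.apply_eq_zero (by simpa using hij)
  rw [← swap_eq, sum_eq, zero, add_zero]

open MulAction in
theorem exists_eq_smul_one_add_smul_swapOp {d : ℕ} {X : Matrix (Fin d × Fin d) (Fin d × Fin d) ℂ}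
    (hX : IsBilocallyInvariant X) : ∃ a b : ℂ, X = a • 1 + b • swapOp d := by
  obtain _ | _ := subsingleton_or_nontrivial (Fin d)
  · obtain _ | ⟨⟨x⟩⟩ := isEmpty_or_nonempty (Fin d)
    · exact ⟨0, 0, Subsingleton.elim _ _⟩
    · refine ⟨X (x, x) (x, x), 0, ?_⟩
      ext p q
      simp [Subsingleton.elim p (x, x), Subsingleton.elim q (x, x)]
  obtain ⟨x, y, hxy⟩ := exists_pair_ne (Fin d)
  have apply_of_ne {i j : Fin d} (hij : i ≠ j) :
      X (i, j) (i, j) = X (x, y) (x, y) ∧ X (i, j) (j, i) = X (x, y) (y, x) := by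
    obtain ⟨σ, rfl, rfl⟩ := is_two_pretransitive_iff.1
      (Equiv.Perm.isMultiplyPretransitive (Fin d) 2) hxy hij
    exact ⟨hX.apply_perm .., hX.apply_perm ..⟩
  have apply_self (i : Fin d) : X (i, i) (i, i) = X (x, y) (x, y) + X (x, y) (y, x) := by
    obtain ⟨j, hij⟩ := exists_ne i
    rw [hX.apply_self_self hij.symm, (apply_of_ne hij.symm).1, (apply_of_ne hij.symm).2]
  refine ⟨X (x, y) (x, y), X (x, y) (y, x), ?_⟩
  ext ⟨i, j⟩ ⟨k, l⟩
  by_cases h : s(i, j) = s(k, l)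
  · obtain rfl | hij := eq_or_ne i j
    · obtain ⟨rfl, rfl⟩ : i = k ∧ i = l := by simpa [and_comm] using h
      simp [swapOp, apply_self]
    · obtain ⟨rfl, rfl⟩ | ⟨rfl, rfl⟩ := Sym2.eq_iff.1 h
      · simp [swapOp, apply_of_ne hij, hij]
      · simp [swapOp, apply_of_ne hij, hij]
  · rw [hX.apply_eq_zero h]
    rw [Sym2.eq_iff, not_or] at h
    simp [swapOp, one_apply, h]

end IsBilocallyInvariant

end Commutant

section Projectors

variable {d : ℕ}

theorem swapOp_mul_kronecker (v w : Matrix (Fin d) (Fin d) ℂ) :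
    swapOp d * (v ⊗ₖ w) = (w ⊗ₖ v) * swapOp d := by
  ext ⟨i, j⟩ ⟨k, l⟩
  simp [mul_apply, swapOp, Fintype.sum_prod_type, ite_and, mul_comm]

theorem commute_symProj_kronecker_self (v : Matrix (Fin d) (Fin d) ℂ) :
    Commute (symProj d) (v ⊗ₖ v) :=
  ((Commute.one_left _).add_left (swapOp_mul_kronecker v v)).smul_left _

theorem commute_antisymProj_kronecker_self (v : Matrix (Fin d) (Fin d) ℂ) :
    Commute (antisymProj d) (v ⊗ₖ v) :=
  ((Commute.one_left _).sub_left (swapOp_mul_kronecker v v)).smul_left _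

theorem swapOp_mul_self : swapOp d * swapOp d = 1 := by
  ext ⟨i, j⟩ ⟨k, l⟩
  simp [mul_apply, swapOp, Fintype.sum_prod_type, ite_and, one_apply, Prod.ext_iff]

theorem trace_swapOp : (swapOp d).trace = d := by
  simp [trace, swapOp, Fintype.sum_prod_type, ite_and]

theorem trace_symProj : (symProj d).trace = d * (d + 1) / 2 := by
  rw [symProj, trace_smul, trace_add, trace_one, trace_swapOp, Fintype.card_prod, Fintype.card_fin,
    Nat.cast_mul, smul_eq_mul]
  ring

theorem trace_antisymProj : (antisymProj d).trace = d * (d - 1) / 2 := by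
  rw [antisymProj, trace_smul, trace_sub, trace_one, trace_swapOp, Fintype.card_prod,
    Fintype.card_fin, Nat.cast_mul, smul_eq_mul]
  ring

theorem trace_symProj_ne_zero (hd : d ≠ 0) : (symProj d).trace ≠ 0 := by
  rw [trace_symProj]
  exact div_ne_zero (mul_ne_zero (Nat.cast_ne_zero.2 hd) d.cast_add_one_ne_zero) two_ne_zero

theorem trace_antisymProj_ne_zero (hd : 2 ≤ d) : (antisymProj d).trace ≠ 0 := by
  have cast_ne_zero : (d : ℂ) ≠ 0 := Nat.cast_ne_zero.2 (by lia)
  have cast_ne_one : (d : ℂ) ≠ 1 := Nat.cast_ne_one.2 (by lia)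
  rw [trace_antisymProj]
  exact div_ne_zero (mul_ne_zero cast_ne_zero (sub_ne_zero.2 cast_ne_one)) two_ne_zero

theorem symProj_mul_self : symProj d * symProj d = symProj d := by
  simp only [symProj, smul_mul_smul_comm, add_mul, mul_add, one_mul, mul_one, swapOp_mul_self]
  module

theorem antisymProj_mul_self : antisymProj d * antisymProj d = antisymProj d := by
  simp only [antisymProj, smul_mul_smul_comm, sub_mul, mul_sub, one_mul, mul_one, swapOp_mul_self]
  module

theorem symProj_mul_antisymProj : symProj d * antisymProj d = 0 := by
  simp only [symProj, antisymProj, smul_mul_smul_comm, add_mul, mul_sub, one_mul, mul_one,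
    swapOp_mul_self]
  module

theorem antisymProj_mul_symProj : antisymProj d * symProj d = 0 := by
  simp only [symProj, antisymProj, smul_mul_smul_comm, sub_mul, mul_add, one_mul, mul_one,
    swapOp_mul_self]
  module

theorem IsBilocallyInvariant.eq_trace_smul_add_trace_smul (hd : 2 ≤ d)
    {X : Matrix (Fin d × Fin d) (Fin d × Fin d) ℂ} (hX : IsBilocallyInvariant X) :
    X = ((antisymProj d * X).trace / (antisymProj d).trace) • antisymProj d +
      ((symProj d * X).trace / (symProj d).trace) • symProj d := by
  obtain ⟨a, b, hab⟩ := hX.exists_eq_smul_one_add_smul_swapOp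
  have X_eq : X = (a - b) • antisymProj d + (a + b) • symProj d := by
    rw [hab, antisymProj, symProj]
    module
  have trace_anti : (antisymProj d * X).trace = (a - b) * (antisymProj d).trace := by
    simp [X_eq, mul_add, antisymProj_mul_self, antisymProj_mul_symProj]
  have trace_sym : (symProj d * X).trace = (a + b) * (symProj d).trace := by
    simp [X_eq, mul_add, symProj_mul_self, symProj_mul_antisymProj]
  rw [trace_anti, trace_sym, mul_div_cancel_right₀ _ (trace_antisymProj_ne_zero hd),
    mul_div_cancel_right₀ _ (trace_symProj_ne_zero (by lia))]
  exact X_eq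

end Projectors

section Twirl

section Trace

variable {m R : Type*} [Fintype m] [DecidableEq m] [CommRing R] [StarRing R]

theorem trace_mul_conj {u B : Matrix m m R} (hu : u ∈ unitaryGroup m R) (hB : Commute B u)
    (X : Matrix m m R) : (B * (uᴴ * X * u)).trace = (B * X).trace := by
  calc (B * (uᴴ * X * u)).trace = (u * B * (uᴴ * X)).trace := by
        rw [← mul_assoc, trace_mul_comm, mul_assoc]
    _ = (B * (u * uᴴ) * X).trace := by rw [← hB.eq]; simp only [mul_assoc]
    _ = (B * X).trace := by rw [← star_eq_conjTranspose, mem_unitaryGroup_iff.1 hu, mul_one]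

theorem trace_mul_sum_smul_conj {ι : Type*} [Fintype ι] {u : ι → Matrix m m R} {B : Matrix m m R}
    (hu : ∀ i, u i ∈ unitaryGroup m R) (hB : ∀ i, Commute B (u i)) {p : ι → R}
    (hp : ∑ i, p i = 1) (X : Matrix m m R) :
    (B * ∑ i, p i • ((u i)ᴴ * X * u i)).trace = (B * X).trace := by
  simp only [Finset.mul_sum, trace_sum, mul_smul_comm, trace_smul, trace_mul_conj (hu _) (hB _),
    ← Finset.sum_smul, hp, one_smul]

end Trace

variable {n : Type*} [Fintype n] [DecidableEq n]

/-- The representation `v ↦ v ⊗ v` of the unitary group on the two-fold tensor power. -/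
def bilocalRep : unitaryGroup n ℂ →* Matrix (n × n) (n × n) ℂ where
  toFun v := v ⊗ₖ v
  map_one' := one_kronecker_one
  map_mul' _ _ := mul_kronecker_mul ..

theorem bilocalRep_inv (v : unitaryGroup n ℂ) : bilocalRep v⁻¹ = (bilocalRep v)ᴴ :=
  (conjTranspose_kronecker ..).symm

theorem continuous_bilocalRep : Continuous (bilocalRep (n := n)) :=
  continuous_matrix fun i j ↦ (continuous_subtype_val.matrix_elem i.1 j.1).mul
    (continuous_subtype_val.matrix_elem i.2 j.2)

open scoped Matrix.Norms.L2Operator in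
variable (n) in
theorem exists_convexCombination_isBilocallyInvariant :
    ∃ (k : ℕ) (v : Fin k → Matrix n n ℂ) (p : Fin k → ℝ), (∀ i, v i ∈ unitaryGroup n ℂ) ∧
      (∀ i, 0 ≤ p i) ∧ ∑ i, p i = 1 ∧ ∀ ρ : Matrix (n × n) (n × n) ℂ,
        IsBilocallyInvariant (∑ i, (p i : ℂ) • ((v i ⊗ₖ v i)ᴴ * ρ * (v i ⊗ₖ v i))) := by
  have := compactSpace_unitary (A := Matrix n n ℂ)
  obtain ⟨ι, _, v, p, hp, hp_sum, hcomm⟩ :=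
    exists_convexCombination_conj_commute (continuous_bilocalRep (n := n))
  let e := (Fintype.equivFin ι).symm
  refine ⟨Fintype.card ι, fun i ↦ v (e i), p ∘ e, fun i ↦ (v (e i)).2, fun i ↦ hp (e i),
    (e.sum_comp p).trans hp_sum, fun ρ w hw ↦ ?_⟩
  have hcomm_w := hcomm ρ ⟨w, hw⟩
  rw [← e.sum_comp] at hcomm_w
  simp only [bilocalRep_inv] at hcomm_w
  simpa only [Complex.coe_smul] using! hcomm_w

end Twirl

/-- Depolarization by a finite family of probabilistic bilocal unitaries (Dür et al.). -/
theorem depolarization_by_bilocal_unitaries (d : ℕ) (hd : 2 ≤ d) :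
    ∃ (k : ℕ) (v : Fin k → Matrix (Fin d) (Fin d) ℂ) (p : Fin k → ℝ),
      (∀ i, v i ∈ Matrix.unitaryGroup (Fin d) ℂ) ∧
      (∀ i, 0 ≤ p i) ∧ (∑ i, p i = 1) ∧
      ∀ ρ : Matrix (Fin d × Fin d) (Fin d × Fin d) ℂ,
        ∑ i, (p i : ℂ) • ((v i ⊗ₖ v i)ᴴ * ρ * (v i ⊗ₖ v i)) =
          ((antisymProj d * ρ).trace / (antisymProj d).trace) • antisymProj d +
          ((symProj d * ρ).trace / (symProj d).trace) • symProj d := by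
  obtain ⟨k, v, p, hv, hp, hp_sum, hinv⟩ := exists_convexCombination_isBilocallyInvariant (Fin d)
  refine ⟨k, v, p, hv, hp, hp_sum, fun ρ ↦ ?_⟩
  have hvv (i : Fin k) : v i ⊗ₖ v i ∈ unitaryGroup (Fin d × Fin d) ℂ :=
    kronecker_mem_unitary (hv i) (hv i)
  have hp_sum_cast : ∑ i, (p i : ℂ) = 1 := by exact_mod_cast hp_sum
  rw [(hinv ρ).eq_trace_smul_add_trace_smul hd,
    trace_mul_sum_smul_conj hvv (fun i ↦ commute_antisymProj_kronecker_self (v i)) hp_sum_cast,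
    trace_mul_sum_smul_conj hvv (fun i ↦ commute_symProj_kronecker_self (v i)) hp_sum_cast]
end
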